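/- For the side-information vending machine at the encoder (with or without side information available at the encoder), the rate-distortion-cost function satisfies the lower bound R_e(D,C) ≥ min [ I(X;X̂) − I(Y;(X,A)) ], where the minimum is over joint laws of the form P_X(x)·P_{A|X}(a|x)·P_{Y|X,A}(y|x,a)·P_{X̂|X,A,Y}(x̂|x,a,y) satisfying E[ρ(X,X̂)] ≤ D and E[Λ(A)] ≤ C. -/

import Mathlib

open scoped BigOperators

noncomputable section

/-- Probability mass of the event `f = a` under the weight function `q` on a finite space. -/
def pmass {Ω α : Type*} [Fintype Ω] [DecidableEq α] (q : Ω → ℝ) (f : Ω → α) (a : α) : ℝ :=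
  ∑ ω, if f ω = a then q ω else 0

/-- Shannon entropy (in bits) of the value of `f` under `q`. -/
def ent {Ω α : Type*} [Fintype Ω] [Fintype α] [DecidableEq α] (q : Ω → ℝ) (f : Ω → α) : ℝ :=
  -∑ a, pmass q f a * Real.logb 2 (pmass q f a)

/-- Conditional Shannon entropy `H(f ∣ g)` (in bits). -/
def condEnt {Ω α β : Type*} [Fintype Ω] [Fintype α] [DecidableEq α] [Fintype β] [DecidableEq β]
    (q : Ω → ℝ) (f : Ω → α) (g : Ω → β) : ℝ :=
  ent q (fun ω => (f ω, g ω)) - ent q g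

/-- Mutual information `I(f ; g)` (in bits). -/
def mutInf {Ω α β : Type*} [Fintype Ω] [Fintype α] [DecidableEq α] [Fintype β] [DecidableEq β]
    (q : Ω → ℝ) (f : Ω → α) (g : Ω → β) : ℝ :=
  ent q f + ent q g - ent q (fun ω => (f ω, g ω))

/-- Conditional mutual information `I(f ; g ∣ h)` (in bits). -/
def condMutInf {Ω α β γ : Type*} [Fintype Ω] [Fintype α] [DecidableEq α] [Fintype β]
    [DecidableEq β] [Fintype γ] [DecidableEq γ]
    (q : Ω → ℝ) (f : Ω → α) (g : Ω → β) (h : Ω → γ) : ℝ :=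
  condEnt q f h - condEnt q f (fun ω => (g ω, h ω))

/-- `q` is a probability mass function on `Ω`. -/
def IsPMF {Ω : Type*} [Fintype Ω] (q : Ω → ℝ) : Prop :=
  (∀ ω, 0 ≤ q ω) ∧ ∑ ω, q ω = 1

variable {𝒳 𝒜 𝒴 Xh : Type}

/-- Joint pmf on `(Xⁿ, Yⁿ)` when the encoder chooses the action sequence `act xⁿ` as a
function of the source, and `Yⁿ` is produced by the memoryless channel `Q = P_{Y|X,A}`. -/
def encActJoint [Fintype 𝒳] (PX : 𝒳 → ℝ) (Q : 𝒳 → 𝒜 → 𝒴 → ℝ) {n : ℕ}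
    (act : (Fin n → 𝒳) → Fin n → 𝒜) : (Fin n → 𝒳) × (Fin n → 𝒴) → ℝ :=
  fun w => (∏ i, PX (w.1 i)) * ∏ i, Q (w.1 i) (act w.1 i) (w.2 i)

/-- Expected total action cost `E[∑ᵢ Λ(Aᵢ)]` when the encoder chooses actions. -/
def encActCost [Fintype 𝒳] (PX : 𝒳 → ℝ) (Λ : 𝒜 → ℝ) {n : ℕ}
    (act : (Fin n → 𝒳) → Fin n → 𝒜) : ℝ :=
  ∑ xs : Fin n → 𝒳, (∏ i, PX (xs i)) * ∑ i, Λ (act xs i)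

/-- Expected total distortion `E[∑ᵢ ρ(Xᵢ, X̂ᵢ)]` for an encoder-actions scheme whose
message is an arbitrary function `msg` of the realized pair `(Xⁿ, Yⁿ)`. -/
def encActDist [Fintype 𝒳] [Fintype 𝒴] (PX : 𝒳 → ℝ) (Q : 𝒳 → 𝒜 → 𝒴 → ℝ)
    (ρ : 𝒳 → Xh → ℝ) {n M : ℕ} (act : (Fin n → 𝒳) → Fin n → 𝒜)
    (msg : (Fin n → 𝒳) → (Fin n → 𝒴) → Fin M)
    (dec : Fin M → (Fin n → 𝒴) → Fin n → Xh) : ℝ :=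
  ∑ w : (Fin n → 𝒳) × (Fin n → 𝒴),
    encActJoint PX Q act w * ∑ i, ρ (w.1 i) (dec (msg w.1 w.2) w.2 i)

/-- `(R, D, C)` is achievable with encoder-chosen actions, the encoder NOT having access
to the side information (the message is a function of `Xⁿ` alone). -/
def AchievableEncNoSI [Fintype 𝒳] [Fintype 𝒴] (PX : 𝒳 → ℝ) (Q : 𝒳 → 𝒜 → 𝒴 → ℝ)
    (ρ : 𝒳 → Xh → ℝ) (Λ : 𝒜 → ℝ) (R D C : ℝ) : Prop :=
  ∀ ε > (0 : ℝ), ∃ N : ℕ, ∀ n ≥ N,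
    ∃ (act : (Fin n → 𝒳) → Fin n → 𝒜)
      (enc : (Fin n → 𝒳) → Fin ⌈(2 : ℝ) ^ ((n : ℝ) * (R + ε))⌉₊)
      (dec : Fin ⌈(2 : ℝ) ^ ((n : ℝ) * (R + ε))⌉₊ → (Fin n → 𝒴) → Fin n → Xh),
      encActDist PX Q ρ act (fun xs _ => enc xs) dec ≤ n * (D + ε) ∧
      encActCost PX Λ act ≤ n * (C + ε)

/-- `(R, D, C)` is achievable with encoder-chosen actions, the encoder having access to
the side information (the message is a function of `(Xⁿ, Yⁿ)`). -/
def AchievableEncSI [Fintype 𝒳] [Fintype 𝒴] (PX : 𝒳 → ℝ) (Q : 𝒳 → 𝒜 → 𝒴 → ℝ)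
    (ρ : 𝒳 → Xh → ℝ) (Λ : 𝒜 → ℝ) (R D C : ℝ) : Prop :=
  ∀ ε > (0 : ℝ), ∃ N : ℕ, ∀ n ≥ N,
    ∃ (act : (Fin n → 𝒳) → Fin n → 𝒜)
      (enc : (Fin n → 𝒳) → (Fin n → 𝒴) → Fin ⌈(2 : ℝ) ^ ((n : ℝ) * (R + ε))⌉₊)
      (dec : Fin ⌈(2 : ℝ) ^ ((n : ℝ) * (R + ε))⌉₊ → (Fin n → 𝒴) → Fin n → Xh),
      encActDist PX Q ρ act enc dec ≤ n * (D + ε) ∧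
      encActCost PX Λ act ≤ n * (C + ε)

/-- The lower-bound set: values `I(X;X̂) − I(Y;(X,A))` over joint laws of the form
`P_X(x)·w(a|x)·Q(y|x,a)·v(x̂|x,a,y)` satisfying the distortion and cost constraints. -/
def lbSetEnc [Fintype 𝒳] [DecidableEq 𝒳] [Fintype 𝒜] [DecidableEq 𝒜]
    [Fintype 𝒴] [DecidableEq 𝒴] [Fintype Xh] [DecidableEq Xh]
    (PX : 𝒳 → ℝ) (Q : 𝒳 → 𝒜 → 𝒴 → ℝ) (ρ : 𝒳 → Xh → ℝ) (Λ : 𝒜 → ℝ)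
    (D C : ℝ) : Set ℝ :=
  {r | ∃ (w : 𝒳 → 𝒜 → ℝ) (v : 𝒳 → 𝒜 → 𝒴 → Xh → ℝ),
    (∀ x a, 0 ≤ w x a) ∧ (∀ x, ∑ a, w x a = 1) ∧
    (∀ x a y xh, 0 ≤ v x a y xh) ∧ (∀ x a y, ∑ xh, v x a y xh = 1) ∧
    (∑ z : 𝒳 × 𝒜 × 𝒴 × Xh,
        (PX z.1 * w z.1 z.2.1 * Q z.1 z.2.1 z.2.2.1 * v z.1 z.2.1 z.2.2.1 z.2.2.2) *
          ρ z.1 z.2.2.2 ≤ D) ∧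
    (∑ z : 𝒳 × 𝒜 × 𝒴 × Xh,
        (PX z.1 * w z.1 z.2.1 * Q z.1 z.2.1 z.2.2.1 * v z.1 z.2.1 z.2.2.1 z.2.2.2) *
          Λ z.2.1 ≤ C) ∧
    r = mutInf (fun z : 𝒳 × 𝒜 × 𝒴 × Xh =>
          PX z.1 * w z.1 z.2.1 * Q z.1 z.2.1 z.2.2.1 * v z.1 z.2.1 z.2.2.1 z.2.2.2)
          (fun z => z.1) (fun z => z.2.2.2) -
        mutInf (fun z : 𝒳 × 𝒜 × 𝒴 × Xh =>
          PX z.1 * w z.1 z.2.1 * Q z.1 z.2.1 z.2.2.1 * v z.1 z.2.1 z.2.2.1 z.2.2.2)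
          (fun z => z.2.2.1) (fun z => (z.1, z.2.1))}

/-!
Every scheme of block length `n` has a single-letter law: the law of `(Xᵢ, Aᵢ, Yᵢ, X̂ᵢ)` at an
independent uniform time `i`. It is `P_X·P_{A|X}·P_{Y|X,A}·P_{X̂|X,A,Y}` for some test channels,
and its distortion and cost are the per-letter distortion and cost of the scheme. Its objective
`I(X;X̂) − I(Y;(X,A))` is the expected value of the logarithm of
`P_Y(y)·P_{X|X̂}(x|x̂) / (P_X(x)·P_{Y|X,A}(y|x,a))`, so that `n` times the objective compares the
law of `(Xⁿ, Yⁿ)` with the weight `∏ᵢ P_Y(yᵢ)·P_{X|X̂}(xᵢ|x̂ᵢ)`. Once the message and `yⁿ` are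
fixed, `x̂ⁿ` does not depend on `xⁿ`; hence the total weight is at most the number of messages, and
Gibbs' inequality bounds `n` times the objective by the logarithm of that number. As the test
channels form a compact set on which everything is continuous, the slack `ε` of achievability can
be removed.

Infima of real sets that are empty or unbounded below are `0` by convention. A negative achievable
rate makes every rate achievable, so that the bound is then needed at rate `0` only; and when
the single-letter constraints are feasible, some rate is achievable, by sending `xⁿ` losslessly.
-/

/-! ### Weights on finite spaces -/

section PiSum

variable {ι β R : Type*} [Fintype ι] [DecidableEq ι] [Fintype β] [CommSemiring R]

lemma sum_prod_apply_eq_one {q : ι → β → R} (hq : ∀ j, ∑ b, q j b = 1) :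
    ∑ ys : ι → β, ∏ j, q j (ys j) = 1 := by
  rw [← Fintype.prod_sum]
  exact Finset.prod_eq_one fun j _ => hq j

lemma sum_prod_apply_mul {q : ι → β → R} {i : ι} (hq : ∀ j ≠ i, ∑ b, q j b = 1) (f : β → R) :
    ∑ ys : ι → β, (∏ j, q j (ys j)) * f (ys i) = ∑ y, q i y * f y := by
  have absorb (ys : ι → β) : (∏ j, q j (ys j)) * f (ys i)
      = ∏ j, q j (ys j) * if j = i then f (ys j) else 1 := by
    rw [Finset.prod_mul_distrib]
    simp
  simp_rw [absorb]
  rw [← Fintype.prod_sum fun j b => q j b * if j = i then f b else 1, Fintype.prod_eq_single i]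
  · simp
  · intro j hj
    simp [hj, hq]

end PiSum

lemma sum_logb_sub_logb {ι : Type*} [Fintype ι] {u v : ι → ℝ} (b : ℝ) (hu : ∀ i, u i ≠ 0)
    (hv : ∀ i, v i ≠ 0) :
    ∑ i, (Real.logb b (u i) - Real.logb b (v i))
      = Real.logb b (∏ i, u i) - Real.logb b (∏ i, v i) := by
  rw [Finset.sum_sub_distrib, Real.logb_prod _ _ fun i _ => hu i,
    Real.logb_prod _ _ fun i _ => hv i]

section Mass

variable {Ω α β : Type*} [Fintype Ω] [DecidableEq α] [DecidableEq β] {q : Ω → ℝ}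

lemma pmass_eq_sum_mul (q : Ω → ℝ) (f : Ω → α) (a : α) :
    pmass q f a = ∑ ω, q ω * if f ω = a then 1 else 0 := by
  simp [pmass]

lemma sum_pmass_mul [Fintype α] (q : Ω → ℝ) (f : Ω → α) (φ : α → ℝ) :
    ∑ a, pmass q f a * φ a = ∑ ω, q ω * φ (f ω) := by
  simp_rw [pmass, Finset.sum_mul]
  rw [Finset.sum_comm]
  simp [ite_mul]

lemma sum_pmass [Fintype α] (q : Ω → ℝ) (f : Ω → α) : ∑ a, pmass q f a = ∑ ω, q ω := by
  simpa using sum_pmass_mul q f fun _ => 1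

lemma sum_pmass_prodMk_left [Fintype α] (q : Ω → ℝ) (f : Ω → α) (g : Ω → β) (b : β) :
    ∑ a, pmass q (fun ω => (f ω, g ω)) (a, b) = pmass q g b := by
  simp_rw [pmass]
  rw [Finset.sum_comm]
  refine Finset.sum_congr rfl fun ω _ => ?_
  by_cases h : g ω = b <;> simp [h]

lemma sum_pmass_prodMk_right [Fintype β] (q : Ω → ℝ) (f : Ω → α) (g : Ω → β) (a : α) :
    ∑ b, pmass q (fun ω => (f ω, g ω)) (a, b) = pmass q f a := by
  simp_rw [pmass]
  rw [Finset.sum_comm]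
  refine Finset.sum_congr rfl fun ω _ => ?_
  by_cases h : f ω = a <;> simp [h]

lemma pmass_nonneg (hq : ∀ ω, 0 ≤ q ω) (f : Ω → α) (a : α) : 0 ≤ pmass q f a :=
  Finset.sum_nonneg fun ω _ => ite_nonneg (hq ω) le_rfl

lemma pmass_pos (hq : ∀ ω, 0 ≤ q ω) (f : Ω → α) {ω : Ω} (hω : 0 < q ω) : 0 < pmass q f (f ω) :=
  Finset.sum_pos' (fun ω' _ => ite_nonneg (hq ω') le_rfl) ⟨ω, Finset.mem_univ ω, by simpa⟩

lemma ent_eq_neg_sum [Fintype α] (q : Ω → ℝ) (f : Ω → α) :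
    ent q f = -∑ ω, q ω * Real.logb 2 (pmass q f (f ω)) := by
  rw [ent, sum_pmass_mul q f fun a => Real.logb 2 (pmass q f a)]

lemma mutInf_eq_sum [Fintype α] [Fintype β] (q : Ω → ℝ) (f : Ω → α) (g : Ω → β) :
    mutInf q f g = ∑ ω, q ω * (Real.logb 2 (pmass q (fun ω => (f ω, g ω)) (f ω, g ω))
      - Real.logb 2 (pmass q f (f ω)) - Real.logb 2 (pmass q g (g ω))) := by
  simp_rw [mutInf, ent_eq_neg_sum, mul_sub, Finset.sum_sub_distrib]
  ring

lemma continuous_ent_comp [Fintype α] {T : Type*} [TopologicalSpace T] {q : T → Ω → ℝ}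
    (hq : Continuous q) (f : Ω → α) : Continuous fun t => ent (q t) f := by
  have hmass (a : α) : Continuous fun t => pmass (q t) f a := by
    simp_rw [pmass_eq_sum_mul]
    fun_prop
  simp_rw [ent, Real.logb, ← mul_div_assoc]
  exact (continuous_finsetSum _ fun a _ =>
    (Real.continuous_mul_log.comp (hmass a)).div_const _).neg

lemma continuous_mutInf_comp [Fintype α] [Fintype β] {T : Type*} [TopologicalSpace T]
    {q : T → Ω → ℝ} (hq : Continuous q) (f : Ω → α) (g : Ω → β) :
    Continuous fun t => mutInf (q t) f g :=
  ((continuous_ent_comp hq f).add (continuous_ent_comp hq g)).sub (continuous_ent_comp hq _)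

lemma mul_log_sub_log_le {p s M : ℝ} (hp : 0 ≤ p) (hs : 0 ≤ s) (hps : 0 < p → 0 < s)
    (hM : 0 < M) : p * (Real.log s - Real.log p - Real.log M) ≤ s / M - p := by
  rcases hp.eq_or_lt with rfl | hp
  · simp only [zero_mul, sub_zero]
    positivity
  · have hs := hps hp
    have hlog := Real.log_le_sub_one_of_pos (show 0 < s / p / M by positivity)
    rw [Real.log_div (by positivity) hM.ne', Real.log_div hs.ne' hp.ne'] at hlog
    calc p * (Real.log s - Real.log p - Real.log M) ≤ p * (s / p / M - 1) := by gcongr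
      _ = s / M - p := by field_simp

lemma IsPMF.sum_mul_logb_sub_logb_le {b M : ℝ} (hb : 1 < b) {s : Ω → ℝ} (hq : IsPMF q)
    (hs : ∀ ω, 0 ≤ s ω) (hqs : ∀ ω, 0 < q ω → 0 < s ω) (hM : 0 < M) (hsM : ∑ ω, s ω ≤ M) :
    ∑ ω, q ω * (Real.logb b (s ω) - Real.logb b (q ω)) ≤ Real.logb b M := by
  have hlog : ∑ ω, q ω * (Real.log (s ω) - Real.log (q ω)) - Real.log M ≤ 0 :=
    calc ∑ ω, q ω * (Real.log (s ω) - Real.log (q ω)) - Real.log M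
        = ∑ ω, q ω * (Real.log (s ω) - Real.log (q ω) - Real.log M) := by
          simp_rw [mul_sub _ (_ - _), Finset.sum_sub_distrib, ← Finset.sum_mul, hq.2, one_mul]
      _ ≤ ∑ ω, (s ω / M - q ω) :=
          Finset.sum_le_sum fun ω _ => mul_log_sub_log_le (hq.1 ω) (hs ω) (hqs ω) hM
      _ = (∑ ω, s ω) / M - 1 := by rw [Finset.sum_sub_distrib, ← Finset.sum_div, hq.2]
      _ ≤ 0 := sub_nonpos.2 ((div_le_one hM).2 hsM)
  have hb' : 0 < Real.log b := Real.log_pos hb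
  simp_rw [Real.logb, ← sub_div, ← mul_div_assoc, ← Finset.sum_div]
  gcongr
  linarith

end Mass

lemma exists_kernel_of_nonneg {α β : Type*} [Fintype β] [Nonempty β] {q : α → β → ℝ}
    (hq : ∀ a b, 0 ≤ q a b) :
    ∃ k : α → β → ℝ, (∀ a, IsPMF (k a)) ∧ ∀ a b, (∑ b', q a b') * k a b = q a b := by
  refine ⟨fun a b => if ∑ b', q a b' = 0 then (Fintype.card β : ℝ)⁻¹ else q a b / ∑ b', q a b',
    fun a => ?_, fun a b => ?_⟩ <;> by_cases h : ∑ b', q a b' = 0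
  · simp only [h, if_true]
    exact ⟨fun _ => by positivity, by simp⟩
  · simp only [h, if_false]
    exact ⟨fun b => div_nonneg (hq a b) (Finset.sum_nonneg fun b' _ => hq a b'),
      by rw [← Finset.sum_div, div_self h]⟩
  · rw [h, zero_mul, (Finset.sum_eq_zero_iff_of_nonneg fun b' _ => hq a b').1 h b
      (Finset.mem_univ b)]
  · simp only [h, if_false]
    exact mul_div_cancel₀ _ h

section TimeAverage

variable {W Ω α : Type*} [Fintype W] [DecidableEq Ω] {n : ℕ}

/-- The law of `Z w i`, where `w` has weight `p` and the time index `i` is independent of `w` and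
uniform on `Fin n`; it turns a block scheme into a single-letter law. For `n = 0` it is zero. -/
def avgLaw (p : W → ℝ) (Z : W → Fin n → Ω) : Ω → ℝ :=
  pmass (fun t : W × Fin n => p t.1 / n) fun t => Z t.1 t.2

lemma avgLaw_nonneg {p : W → ℝ} (hp : ∀ w, 0 ≤ p w) (Z : W → Fin n → Ω) (z : Ω) :
    0 ≤ avgLaw p Z z :=
  pmass_nonneg (q := fun t : W × Fin n => p t.1 / n)
    (fun t => div_nonneg (hp t.1) n.cast_nonneg) (fun t => Z t.1 t.2) z

lemma avgLaw_pos {p : W → ℝ} (hp : ∀ w, 0 ≤ p w) (Z : W → Fin n → Ω) {w : W} (hw : 0 < p w)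
    (i : Fin n) : 0 < avgLaw p Z (Z w i) :=
  pmass_pos (q := fun t : W × Fin n => p t.1 / n) (ω := (w, i))
    (fun t => div_nonneg (hp t.1) n.cast_nonneg) (fun t => Z t.1 t.2)
    (div_pos hw (Nat.cast_pos.2 i.pos))

variable [Fintype Ω]

lemma sum_avgLaw_mul (p : W → ℝ) (Z : W → Fin n → Ω) (φ : Ω → ℝ) :
    ∑ z, avgLaw p Z z * φ z = (∑ w, p w * ∑ i, φ (Z w i)) / n := by
  simp_rw [avgLaw, sum_pmass_mul, Fintype.sum_prod_type, div_mul_eq_mul_div, ← Finset.sum_div,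
    ← Finset.mul_sum]

lemma pmass_avgLaw [DecidableEq α] (p : W → ℝ) (Z : W → Fin n → Ω) (g : Ω → α) (b : α) :
    pmass (avgLaw p Z) g b = (∑ i, pmass p (fun w => g (Z w i)) b) / n := by
  simp_rw [pmass_eq_sum_mul, sum_avgLaw_mul p Z fun z => if g z = b then 1 else 0, Finset.mul_sum]
  rw [Finset.sum_comm]

end TimeAverage

/-! ### Single-letter laws -/

section SingleLetter

variable [Fintype 𝒳] [DecidableEq 𝒳] [Fintype 𝒜] [Fintype 𝒴] [DecidableEq 𝒴] [Fintype Xh]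
    {PX : 𝒳 → ℝ} {Q : 𝒳 → 𝒜 → 𝒴 → ℝ} {q : 𝒳 × 𝒜 × 𝒴 × Xh → ℝ}

/-- A law of `(X, A, Y, X̂)` is a vending law when `X` has law `P_X` and `Y` is the output of the
channel `P_{Y|X,A}`. The channel condition is the product form `P_{XAY} = P_{XA}·P_{Y|X,A}`, so that
no conditioning on null events is involved. -/
structure IsVendingLaw [DecidableEq 𝒜] (PX : 𝒳 → ℝ) (Q : 𝒳 → 𝒜 → 𝒴 → ℝ)
    (q : 𝒳 × 𝒜 × 𝒴 × Xh → ℝ) : Prop where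
  nonneg : ∀ z, 0 ≤ q z
  source : ∀ x, pmass q (fun z => z.1) x = PX x
  channel : ∀ x a y, pmass q (fun z => (z.2.2.1, (z.1, z.2.1))) (y, (x, a))
    = pmass q (fun z => (z.1, z.2.1)) (x, a) * Q x a y

lemma IsVendingLaw.isPMF [DecidableEq 𝒜] (hq : IsVendingLaw PX Q q) (hPX : IsPMF PX) :
    IsPMF q := by
  refine ⟨hq.nonneg, ?_⟩
  rw [← sum_pmass q fun z => z.1, Finset.sum_congr rfl fun x _ => hq.source x, hPX.2]

variable [DecidableEq Xh]

/-- The weight `P_Y(y)·P_{X|X̂}(x|x̂)` (zero when `P_X̂(x̂) = 0`). Comparing the law of a scheme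
with products of these weights gives the converse. -/
def backwardWeight (q : 𝒳 × 𝒜 × 𝒴 × Xh → ℝ) (x : 𝒳) (y : 𝒴) (xh : Xh) : ℝ :=
  pmass q (fun z => z.2.2.1) y *
    (pmass q (fun z => (z.1, z.2.2.2)) (x, xh) / pmass q (fun z => z.2.2.2) xh)

lemma backwardWeight_nonneg (hq : ∀ z, 0 ≤ q z) (x : 𝒳) (y : 𝒴) (xh : Xh) :
    0 ≤ backwardWeight q x y xh :=
  mul_nonneg (pmass_nonneg hq _ _) (div_nonneg (pmass_nonneg hq _ _) (pmass_nonneg hq _ _))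

lemma backwardWeight_pos (hq : ∀ z, 0 ≤ q z) {z : 𝒳 × 𝒜 × 𝒴 × Xh} (hz : 0 < q z) :
    0 < backwardWeight q z.1 z.2.2.1 z.2.2.2 :=
  mul_pos (pmass_pos hq (fun z => z.2.2.1) hz)
    (div_pos (pmass_pos hq (fun z => (z.1, z.2.2.2)) hz) (pmass_pos hq (fun z => z.2.2.2) hz))

lemma sum_backwardWeight_le (hq : ∀ z, 0 ≤ q z) (y : 𝒴) (xh : Xh) :
    ∑ x, backwardWeight q x y xh ≤ pmass q (fun z => z.2.2.1) y := by
  simp_rw [backwardWeight]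
  rw [← Finset.mul_sum, ← Finset.sum_div, sum_pmass_prodMk_left q (fun z => z.1)]
  exact mul_le_of_le_one_right (pmass_nonneg hq _ y) (div_self_le_one _)

variable [DecidableEq 𝒜]

/-- The single-letter objective `I(X;X̂) − I(Y;(X,A))` of a law of `(X, A, Y, X̂)`. -/
def singleLetterRate (q : 𝒳 × 𝒜 × 𝒴 × Xh → ℝ) : ℝ :=
  mutInf q (fun z => z.1) (fun z => z.2.2.2) - mutInf q (fun z => z.2.2.1) (fun z => (z.1, z.2.1))

lemma IsVendingLaw.singleLetterRate_eq (hq : IsVendingLaw PX Q q) :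
    singleLetterRate q = ∑ z, q z * (Real.logb 2 (backwardWeight q z.1 z.2.2.1 z.2.2.2)
      - Real.logb 2 (PX z.1 * Q z.1 z.2.1 z.2.2.1)) := by
  rw [singleLetterRate, mutInf_eq_sum, mutInf_eq_sum, ← Finset.sum_sub_distrib]
  refine Finset.sum_congr rfl fun z _ => ?_
  rcases (hq.nonneg z).eq_or_lt with hz | hz
  · simp [← hz]
  have hX := (pmass_pos hq.nonneg (fun z => z.1) hz).ne'
  have hY := (pmass_pos hq.nonneg (fun z => z.2.2.1) hz).ne'
  have hXh := (pmass_pos hq.nonneg (fun z => z.2.2.2) hz).ne'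
  have hXXh := (pmass_pos hq.nonneg (fun z => (z.1, z.2.2.2)) hz).ne'
  have hYXA := (pmass_pos hq.nonneg (fun z => (z.2.2.1, (z.1, z.2.1))) hz).ne'
  rw [hq.source] at hX
  rw [hq.channel] at hYXA
  rw [backwardWeight, hq.source, hq.channel, Real.logb_mul hY (div_ne_zero hXXh hXh),
    Real.logb_div hXXh hXh, Real.logb_mul hX (right_ne_zero_of_mul hYXA),
    Real.logb_mul (left_ne_zero_of_mul hYXA) (right_ne_zero_of_mul hYXA)]
  ring

end SingleLetter

lemma sum_prod_decoder_le_card {ι 𝒯 : Type*} [Fintype ι] [DecidableEq ι] [Fintype 𝒯]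
    [Fintype 𝒳] [Fintype 𝒴] {W : 𝒳 → 𝒴 → Xh → ℝ} {r : 𝒴 → ℝ} (hW : ∀ x y xh, 0 ≤ W x y xh)
    (hWr : ∀ y xh, ∑ x, W x y xh ≤ r y) (hr : ∑ y, r y = 1)
    (msg : (ι → 𝒳) × (ι → 𝒴) → 𝒯) (dec : 𝒯 → (ι → 𝒴) → ι → Xh) :
    ∑ w, ∏ i, W (w.1 i) (w.2 i) (dec (msg w) w.2 i) ≤ Fintype.card 𝒯 :=
  calc ∑ w, ∏ i, W (w.1 i) (w.2 i) (dec (msg w) w.2 i)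
      ≤ ∑ w : (ι → 𝒳) × (ι → 𝒴), ∑ m, ∏ i, W (w.1 i) (w.2 i) (dec m w.2 i) :=
        Finset.sum_le_sum fun w _ => Finset.single_le_sum
          (f := fun m => ∏ i, W (w.1 i) (w.2 i) (dec m w.2 i))
          (fun m _ => Finset.prod_nonneg fun i _ => hW _ _ _) (Finset.mem_univ (msg w))
    _ = ∑ m, ∑ ys : ι → 𝒴, ∏ i, ∑ x, W x (ys i) (dec m ys i) := by
        simp_rw [Finset.sum_comm (t := (Finset.univ : Finset 𝒯)), Fintype.sum_prod_type_right,
          Fintype.prod_sum]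
    _ ≤ ∑ _m : 𝒯, ∑ ys : ι → 𝒴, ∏ i, r (ys i) := by
        gcongr
        exacts [fun i _ => Finset.sum_nonneg fun x _ => hW _ _ _, hWr _ _]
    _ = Fintype.card 𝒯 := by
        simp [sum_prod_apply_eq_one fun _ : ι => hr]

/-! ### The law of a block scheme -/

section Scheme

variable [Fintype 𝒳] {PX : 𝒳 → ℝ} {Q : 𝒳 → 𝒜 → 𝒴 → ℝ} {n : ℕ}
    {act : (Fin n → 𝒳) → Fin n → 𝒜}

lemma encActJoint_eq_prod (w : (Fin n → 𝒳) × (Fin n → 𝒴)) :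
    encActJoint PX Q act w = ∏ i, PX (w.1 i) * Q (w.1 i) (act w.1 i) (w.2 i) :=
  Finset.prod_mul_distrib.symm

lemma encActJoint_nonneg (hPX : ∀ x, 0 ≤ PX x) (hQ : ∀ x a y, 0 ≤ Q x a y)
    (w : (Fin n → 𝒳) × (Fin n → 𝒴)) : 0 ≤ encActJoint PX Q act w :=
  mul_nonneg (Finset.prod_nonneg fun _ _ => hPX _) (Finset.prod_nonneg fun _ _ => hQ _ _ _)

variable [Fintype 𝒴]

lemma sum_encActJoint_mul_source (hQ : ∀ x a, ∑ y, Q x a y = 1) (f : (Fin n → 𝒳) → ℝ) :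
    ∑ w, encActJoint PX Q act w * f w.1 = ∑ xs, (∏ i, PX (xs i)) * f xs := by
  simp_rw [Fintype.sum_prod_type, encActJoint, ← Finset.sum_mul, ← Finset.mul_sum]
  refine Finset.sum_congr rfl fun xs _ => ?_
  rw [sum_prod_apply_eq_one fun i => hQ (xs i) (act xs i), mul_one]

lemma isPMF_encActJoint (hPX : IsPMF PX) (hQ₀ : ∀ x a y, 0 ≤ Q x a y)
    (hQ₁ : ∀ x a, ∑ y, Q x a y = 1) : IsPMF (encActJoint PX Q act) := by
  refine ⟨encActJoint_nonneg hPX.1 hQ₀, ?_⟩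
  have hsum := sum_encActJoint_mul_source (PX := PX) (act := act) hQ₁ fun _ => 1
  simpa only [mul_one, sum_prod_apply_eq_one fun _ => hPX.2] using hsum

lemma pmass_encActJoint_source [DecidableEq 𝒳] (hPX : ∑ x, PX x = 1)
    (hQ : ∀ x a, ∑ y, Q x a y = 1) (i : Fin n) (x : 𝒳) :
    pmass (encActJoint PX Q act) (fun w => w.1 i) x = PX x := by
  rw [pmass_eq_sum_mul, sum_encActJoint_mul_source hQ fun xs => if xs i = x then 1 else 0,
    sum_prod_apply_mul (fun _ _ => hPX) fun b => if b = x then 1 else 0]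
  simp

lemma pmass_encActJoint_channel [DecidableEq 𝒳] [DecidableEq 𝒜] [DecidableEq 𝒴]
    (hQ : ∀ x a, ∑ y, Q x a y = 1) (i : Fin n) (x : 𝒳) (a : 𝒜) (y : 𝒴) :
    pmass (encActJoint PX Q act) (fun w => (w.2 i, (w.1 i, act w.1 i))) (y, (x, a))
      = pmass (encActJoint PX Q act) (fun w => (w.1 i, act w.1 i)) (x, a) * Q x a y := by
  rw [pmass_eq_sum_mul, pmass_eq_sum_mul,
    sum_encActJoint_mul_source hQ fun xs => if (xs i, act xs i) = (x, a) then 1 else 0,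
    Finset.sum_mul, Fintype.sum_prod_type]
  refine Finset.sum_congr rfl fun xs _ => ?_
  by_cases h : (xs i, act xs i) = (x, a)
  · obtain ⟨rfl, rfl⟩ := Prod.mk.inj h
    simp only [encActJoint, Prod.mk.injEq, and_true, if_true, mul_one, mul_assoc,
      ← Finset.mul_sum]
    rw [sum_prod_apply_mul (q := fun j => Q (xs j) (act xs j)) (fun _ _ => hQ _ _)
      fun b => if b = y then 1 else 0]
    simp
  · simp [h]

/-- The letters `(Xᵢ, Aᵢ, Yᵢ, X̂ᵢ)` produced by the action strategy `act` and the reconstruction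
`xhat` when the source and channel outputs are `w`. -/
def schemeLetter (act : (Fin n → 𝒳) → Fin n → 𝒜)
    (xhat : (Fin n → 𝒳) × (Fin n → 𝒴) → Fin n → Xh) (w : (Fin n → 𝒳) × (Fin n → 𝒴)) (i : Fin n) :
    𝒳 × 𝒜 × 𝒴 × Xh :=
  (w.1 i, act w.1 i, w.2 i, xhat w i)

variable [DecidableEq 𝒳] [Fintype 𝒜] [DecidableEq 𝒜] [DecidableEq 𝒴] [Fintype Xh] [DecidableEq Xh]

lemma isVendingLaw_avgLaw (hPX : IsPMF PX) (hQ₀ : ∀ x a y, 0 ≤ Q x a y)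
    (hQ₁ : ∀ x a, ∑ y, Q x a y = 1) (hn : 0 < n)
    (xhat : (Fin n → 𝒳) × (Fin n → 𝒴) → Fin n → Xh) :
    IsVendingLaw PX Q (avgLaw (encActJoint PX Q act) (schemeLetter act xhat)) where
  nonneg := avgLaw_nonneg (encActJoint_nonneg hPX.1 hQ₀) _
  source x := by
    rw [pmass_avgLaw]
    simp only [schemeLetter, pmass_encActJoint_source hPX.2 hQ₁]
    simp [hn.ne']
  channel x a y := by
    simp_rw [pmass_avgLaw, schemeLetter, pmass_encActJoint_channel hQ₁, ← Finset.sum_mul]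
    ring

lemma singleLetterRate_avgLaw_eq (hPX : IsPMF PX) (hQ₀ : ∀ x a y, 0 ≤ Q x a y)
    (hQ₁ : ∀ x a, ∑ y, Q x a y = 1) (hn : 0 < n)
    (xhat : (Fin n → 𝒳) × (Fin n → 𝒴) → Fin n → Xh) :
    singleLetterRate (avgLaw (encActJoint PX Q act) (schemeLetter act xhat))
      = (∑ w, encActJoint PX Q act w * (Real.logb 2 (∏ i, backwardWeight
          (avgLaw (encActJoint PX Q act) (schemeLetter act xhat)) (w.1 i) (w.2 i) (xhat w i))
        - Real.logb 2 (encActJoint PX Q act w))) / n := by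
  set p := encActJoint PX Q act
  set Z := schemeLetter act xhat
  have hq : IsVendingLaw PX Q (avgLaw p Z) := isVendingLaw_avgLaw hPX hQ₀ hQ₁ hn xhat
  have hp₀ : ∀ w, 0 ≤ p w := encActJoint_nonneg hPX.1 hQ₀
  rw [hq.singleLetterRate_eq, sum_avgLaw_mul p Z fun z => Real.logb 2 (backwardWeight (avgLaw p Z)
    z.1 z.2.2.1 z.2.2.2) - Real.logb 2 (PX z.1 * Q z.1 z.2.1 z.2.2.1)]
  congr 1
  refine Finset.sum_congr rfl fun w _ => ?_
  rcases (hp₀ w).eq_or_lt with hw | hw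
  · simp [← hw]
  have hprod : p w = ∏ i, PX (w.1 i) * Q (w.1 i) (act w.1 i) (w.2 i) := encActJoint_eq_prod w
  rw [hprod]
  exact congrArg _ (sum_logb_sub_logb 2
    (fun i => (backwardWeight_pos hq.nonneg (avgLaw_pos hp₀ Z hw i)).ne')
    fun i => Finset.prod_ne_zero_iff.1 (hprod ▸ hw.ne') i (Finset.mem_univ i))

lemma singleLetterRate_avgLaw_le (hPX : IsPMF PX) (hQ₀ : ∀ x a y, 0 ≤ Q x a y)
    (hQ₁ : ∀ x a, ∑ y, Q x a y = 1) (hn : 0 < n) {M : ℕ} (hM : 0 < M)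
    (msg : (Fin n → 𝒳) × (Fin n → 𝒴) → Fin M) (dec : Fin M → (Fin n → 𝒴) → Fin n → Xh) :
    singleLetterRate (avgLaw (encActJoint PX Q act)
      (schemeLetter act fun w => dec (msg w) w.2)) ≤ Real.logb 2 M / n := by
  rw [singleLetterRate_avgLaw_eq hPX hQ₀ hQ₁ hn]
  set p := encActJoint PX Q act
  set Z := schemeLetter act fun w => dec (msg w) w.2
  have hq : IsVendingLaw PX Q (avgLaw p Z) := isVendingLaw_avgLaw hPX hQ₀ hQ₁ hn _
  have hp : IsPMF p := isPMF_encActJoint hPX hQ₀ hQ₁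
  have hweight : ∑ w, ∏ i, backwardWeight (avgLaw p Z) (w.1 i) (w.2 i) (dec (msg w) w.2 i) ≤ M := by
    simpa using sum_prod_decoder_le_card (backwardWeight_nonneg hq.nonneg)
      (sum_backwardWeight_le hq.nonneg)
      ((sum_pmass _ fun z => z.2.2.1).trans (hq.isPMF hPX).2) msg dec
  gcongr
  exact hp.sum_mul_logb_sub_logb_le one_lt_two
    (fun w => Finset.prod_nonneg fun i _ => backwardWeight_nonneg hq.nonneg _ _ _)
    (fun w hw => Finset.prod_pos fun i _ =>
      backwardWeight_pos hq.nonneg (avgLaw_pos hp.1 Z hw i)) (Nat.cast_pos.2 hM) hweight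

end Scheme

/-! ### Test channels -/

/-- A test channel is a pair of families `P_{A|X}`, `P_{X̂|X,A,Y}`. -/
abbrev TestChannel (𝒳 𝒜 𝒴 Xh : Type*) := (𝒳 → 𝒜 → ℝ) × (𝒳 → 𝒜 → 𝒴 → Xh → ℝ)

section TestChannels

variable [Fintype 𝒜] [Fintype Xh]

variable (𝒳 𝒜 𝒴 Xh) in
/-- The stochastic test channels; being a product of simplices, they form a compact set. -/
def testChannels : Set (TestChannel 𝒳 𝒜 𝒴 Xh) :=
  (Set.univ.pi fun _ => stdSimplex ℝ 𝒜) ×ˢ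
    Set.univ.pi fun _ => Set.univ.pi fun _ => Set.univ.pi fun _ => stdSimplex ℝ Xh

lemma mem_testChannels {u : TestChannel 𝒳 𝒜 𝒴 Xh} :
    u ∈ testChannels 𝒳 𝒜 𝒴 Xh ↔ (∀ x, IsPMF (u.1 x)) ∧ ∀ x a y, IsPMF (u.2 x a y) := by
  simp only [testChannels, Set.mem_prod, Set.mem_univ_pi]
  rfl

lemma isCompact_testChannels : IsCompact (testChannels 𝒳 𝒜 𝒴 Xh) :=
  (isCompact_univ_pi fun _ => isCompact_stdSimplex ℝ 𝒜).prod <| isCompact_univ_pi fun _ =>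
    isCompact_univ_pi fun _ => isCompact_univ_pi fun _ => isCompact_stdSimplex ℝ Xh

end TestChannels

/-- The joint law `P_X(x)·P_{A|X}(a|x)·P_{Y|X,A}(y|x,a)·P_{X̂|X,A,Y}(x̂|x,a,y)`. -/
def jointLaw (PX : 𝒳 → ℝ) (Q : 𝒳 → 𝒜 → 𝒴 → ℝ) (u : TestChannel 𝒳 𝒜 𝒴 Xh)
    (z : 𝒳 × 𝒜 × 𝒴 × Xh) : ℝ :=
  PX z.1 * u.1 z.1 z.2.1 * Q z.1 z.2.1 z.2.2.1 * u.2 z.1 z.2.1 z.2.2.1 z.2.2.2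

lemma continuous_jointLaw (PX : 𝒳 → ℝ) (Q : 𝒳 → 𝒜 → 𝒴 → ℝ) :
    Continuous (jointLaw PX Q : TestChannel 𝒳 𝒜 𝒴 Xh → 𝒳 × 𝒜 × 𝒴 × Xh → ℝ) := by
  unfold jointLaw
  fun_prop

section JointLaw

variable [Fintype 𝒜] [Fintype Xh]
    {PX : 𝒳 → ℝ} {Q : 𝒳 → 𝒜 → 𝒴 → ℝ} {u : TestChannel 𝒳 𝒜 𝒴 Xh}

lemma jointLaw_nonneg (hPX : ∀ x, 0 ≤ PX x) (hQ : ∀ x a y, 0 ≤ Q x a y)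
    (hu : u ∈ testChannels 𝒳 𝒜 𝒴 Xh) (z : 𝒳 × 𝒜 × 𝒴 × Xh) : 0 ≤ jointLaw PX Q u z := by
  obtain ⟨hu₁, hu₂⟩ := mem_testChannels.1 hu
  exact mul_nonneg (mul_nonneg (mul_nonneg (hPX _) ((hu₁ _).1 _)) (hQ _ _ _)) ((hu₂ _ _ _).1 _)

variable [Fintype 𝒳] [Fintype 𝒴]

lemma continuous_sum_jointLaw_mul (PX : 𝒳 → ℝ) (Q : 𝒳 → 𝒜 → 𝒴 → ℝ)
    (φ : 𝒳 × 𝒜 × 𝒴 × Xh → ℝ) :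
    Continuous fun u : TestChannel 𝒳 𝒜 𝒴 Xh => ∑ z, jointLaw PX Q u z * φ z := by
  have := continuous_jointLaw (Xh := Xh) PX Q
  fun_prop

lemma sum_jointLaw_mul_source (hQ : ∀ x a, ∑ y, Q x a y = 1) (hu : u ∈ testChannels 𝒳 𝒜 𝒴 Xh)
    (φ : 𝒳 → ℝ) : ∑ z, jointLaw PX Q u z * φ z.1 = ∑ x, PX x * φ x := by
  obtain ⟨hu₁, hu₂⟩ := mem_testChannels.1 hu
  simp_rw [Fintype.sum_prod_type, jointLaw, ← Finset.sum_mul, ← Finset.mul_sum, (hu₂ _ _ _).2,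
    mul_one, ← Finset.mul_sum, hQ, mul_one, ← Finset.mul_sum, (hu₁ _).2, mul_one]

variable [DecidableEq 𝒳] [DecidableEq 𝒜] [DecidableEq 𝒴]

lemma IsVendingLaw.exists_testChannel {q : 𝒳 × 𝒜 × 𝒴 × Xh → ℝ} (hq : IsVendingLaw PX Q q)
    (hPX : IsPMF PX) : ∃ u ∈ testChannels 𝒳 𝒜 𝒴 Xh, jointLaw PX Q u = q := by
  obtain ⟨⟨-, a₀, -, xh₀⟩, -, -⟩ :=
    Finset.exists_ne_zero_of_sum_ne_zero ((hq.isPMF hPX).2.trans_ne one_ne_zero)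
  have : Nonempty 𝒜 := ⟨a₀⟩
  have : Nonempty Xh := ⟨xh₀⟩
  obtain ⟨w, hw, hXA⟩ := exists_kernel_of_nonneg fun x a =>
    pmass_nonneg hq.nonneg (fun z => (z.1, z.2.1)) (x, a)
  obtain ⟨v, hv, hXAY⟩ := exists_kernel_of_nonneg (α := 𝒳 × 𝒜 × 𝒴)
    fun s xh => hq.nonneg (s.1, s.2.1, s.2.2, xh)
  have hsum (x a y) : ∑ xh, q (x, a, y, xh)
      = pmass q (fun z => (z.2.2.1, (z.1, z.2.1))) (y, (x, a)) := by
    simp_rw [pmass, Fintype.sum_prod_type]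
    rw [Fintype.sum_eq_single x, Fintype.sum_eq_single a, Fintype.sum_eq_single y] <;>
      simp +contextual
  refine ⟨(w, fun x a y => v (x, a, y)), mem_testChannels.2 ⟨hw, fun x a y => hv (x, a, y)⟩,
    funext fun ⟨x, a, y, xh⟩ => ?_⟩
  calc PX x * w x a * Q x a y * v (x, a, y) xh
      = pmass q (fun z => (z.1, z.2.1)) (x, a) * Q x a y * v (x, a, y) xh := by
        rw [← hXA, sum_pmass_prodMk_right, hq.source]
    _ = q (x, a, y, xh) := by rw [← hq.channel, ← hsum, hXAY (x, a, y)]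

variable [DecidableEq Xh]

lemma continuous_singleLetterRate_jointLaw (PX : 𝒳 → ℝ) (Q : 𝒳 → 𝒜 → 𝒴 → ℝ) :
    Continuous fun u : TestChannel 𝒳 𝒜 𝒴 Xh => singleLetterRate (jointLaw PX Q u) :=
  (continuous_mutInf_comp (continuous_jointLaw PX Q) _ _).sub
    (continuous_mutInf_comp (continuous_jointLaw PX Q) _ _)

end JointLaw

section LbSet

variable [Fintype 𝒳] [DecidableEq 𝒳] [Fintype 𝒜] [DecidableEq 𝒜]
    [Fintype 𝒴] [DecidableEq 𝒴] [Fintype Xh] [DecidableEq Xh]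
    {PX : 𝒳 → ℝ} {Q : 𝒳 → 𝒜 → 𝒴 → ℝ} {ρ : 𝒳 → Xh → ℝ} {Λ : 𝒜 → ℝ} {D C : ℝ}

lemma mem_lbSetEnc {r : ℝ} :
    r ∈ lbSetEnc PX Q ρ Λ D C ↔ ∃ u ∈ testChannels 𝒳 𝒜 𝒴 Xh,
      ∑ z, jointLaw PX Q u z * ρ z.1 z.2.2.2 ≤ D ∧ ∑ z, jointLaw PX Q u z * Λ z.2.1 ≤ C ∧
        singleLetterRate (jointLaw PX Q u) = r := by
  constructor
  · rintro ⟨w, v, hw₀, hw₁, hv₀, hv₁, hD, hC, rfl⟩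
    exact ⟨(w, v), mem_testChannels.2 ⟨fun x => ⟨hw₀ x, hw₁ x⟩,
      fun x a y => ⟨hv₀ x a y, hv₁ x a y⟩⟩, hD, hC, rfl⟩
  · rintro ⟨u, hu, hD, hC, rfl⟩
    obtain ⟨hu₁, hu₂⟩ := mem_testChannels.1 hu
    exact ⟨u.1, u.2, fun x => (hu₁ x).1, fun x => (hu₁ x).2, fun x a y => (hu₂ x a y).1,
      fun x a y => (hu₂ x a y).2, hD, hC, rfl⟩

lemma bddBelow_lbSetEnc : BddBelow (lbSetEnc PX Q ρ Λ D C) := by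
  have hcompact := (isCompact_testChannels (𝒳 := 𝒳) (𝒜 := 𝒜) (𝒴 := 𝒴) (Xh := Xh)).image
    (continuous_singleLetterRate_jointLaw PX Q)
  refine hcompact.bddBelow.mono fun r hr => ?_
  obtain ⟨u, hu, -, -, rfl⟩ := mem_lbSetEnc.1 hr
  exact Set.mem_image_of_mem _ hu

end LbSet

/-! ### The converse -/

lemma logb_ceil_rpow_le {t : ℝ} (ht : 0 ≤ t) : Real.logb 2 ⌈(2 : ℝ) ^ t⌉₊ ≤ t + 1 := by
  have hpow : (1 : ℝ) ≤ 2 ^ t := Real.one_le_rpow one_le_two ht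
  calc Real.logb 2 ⌈(2 : ℝ) ^ t⌉₊ ≤ Real.logb 2 (2 ^ (t + 1)) := by
        refine Real.logb_le_logb_of_le one_lt_two (by positivity) ?_
        rw [Real.rpow_add_one two_ne_zero, mul_comm]
        exact Nat.ceil_le_two_mul (by linarith)
    _ = t + 1 := Real.logb_rpow two_pos (by norm_num)

lemma exists_nonpos_of_isCompact {T : Type*} [TopologicalSpace T] {K : Set T} (hK : IsCompact K)
    {g : T → ℝ} (hg : ContinuousOn g K) (happrox : ∀ ε > 0, ∃ u ∈ K, g u ≤ ε) :
    ∃ u ∈ K, g u ≤ 0 := by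
  obtain ⟨u₁, hu₁, -⟩ := happrox 1 one_pos
  obtain ⟨u, hu, hmin⟩ := hK.exists_isMinOn ⟨u₁, hu₁⟩ hg
  refine ⟨u, hu, le_of_forall_pos_le_add fun ε hε => ?_⟩
  obtain ⟨v, hv, hvε⟩ := happrox ε hε
  simpa using (hmin hv).trans hvε

section Converse

variable [Fintype 𝒳] [DecidableEq 𝒳] [Fintype 𝒜] [DecidableEq 𝒜]
    [Fintype 𝒴] [DecidableEq 𝒴] [Fintype Xh] [DecidableEq Xh]
    {PX : 𝒳 → ℝ} {Q : 𝒳 → 𝒜 → 𝒴 → ℝ} {ρ : 𝒳 → Xh → ℝ} {Λ : 𝒜 → ℝ} {R D C : ℝ}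

lemma exists_testChannel_of_scheme (hPX : IsPMF PX) (hQ₀ : ∀ x a y, 0 ≤ Q x a y)
    (hQ₁ : ∀ x a, ∑ y, Q x a y = 1) {n M : ℕ} (hn : 0 < n) (hM : 0 < M)
    (act : (Fin n → 𝒳) → Fin n → 𝒜) (msg : (Fin n → 𝒳) → (Fin n → 𝒴) → Fin M)
    (dec : Fin M → (Fin n → 𝒴) → Fin n → Xh) :
    ∃ u ∈ testChannels 𝒳 𝒜 𝒴 Xh,
      (∀ ρ : 𝒳 → Xh → ℝ,
        ∑ z, jointLaw PX Q u z * ρ z.1 z.2.2.2 = encActDist PX Q ρ act msg dec / n) ∧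
      (∀ Λ : 𝒜 → ℝ, ∑ z, jointLaw PX Q u z * Λ z.2.1 = encActCost PX Λ act / n) ∧
      singleLetterRate (jointLaw PX Q u) ≤ Real.logb 2 M / n := by
  let xhat (w : (Fin n → 𝒳) × (Fin n → 𝒴)) : Fin n → Xh := dec (msg w.1 w.2) w.2
  obtain ⟨u, hu, hlaw⟩ :=
    (isVendingLaw_avgLaw (act := act) hPX hQ₀ hQ₁ hn xhat).exists_testChannel hPX
  refine ⟨u, hu, fun ρ => ?_, fun Λ => ?_, ?_⟩ <;> rw [hlaw]
  · exact sum_avgLaw_mul _ _ fun z : 𝒳 × 𝒜 × 𝒴 × Xh => ρ z.1 z.2.2.2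
  · exact (sum_avgLaw_mul _ _ fun z : 𝒳 × 𝒜 × 𝒴 × Xh => Λ z.2.1).trans
      (congrArg (· / (n : ℝ)) (sum_encActJoint_mul_source hQ₁ fun xs => ∑ i, Λ (act xs i)))
  · exact singleLetterRate_avgLaw_le hPX hQ₀ hQ₁ hn hM (fun w => msg w.1 w.2) dec

lemma AchievableEncSI.exists_testChannel_add_le (hPX : IsPMF PX) (hQ₀ : ∀ x a y, 0 ≤ Q x a y)
    (hQ₁ : ∀ x a, ∑ y, Q x a y = 1) (hR : 0 ≤ R) (hach : AchievableEncSI PX Q ρ Λ R D C)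
    {ε : ℝ} (hε : 0 < ε) :
    ∃ u ∈ testChannels 𝒳 𝒜 𝒴 Xh, ∑ z, jointLaw PX Q u z * ρ z.1 z.2.2.2 ≤ D + ε ∧
      ∑ z, jointLaw PX Q u z * Λ z.2.1 ≤ C + ε ∧ singleLetterRate (jointLaw PX Q u) ≤ R + ε := by
  obtain ⟨N, hN⟩ := hach (ε / 2) (half_pos hε)
  obtain ⟨m, hm⟩ := exists_nat_gt (2 / ε)
  set n := max N m
  have hnε : 2 / ε < n := hm.trans_le (Nat.cast_le.2 (le_max_right N m))
  have hn : (0 : ℝ) < n := (div_pos two_pos hε).trans hnε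
  obtain ⟨act, msg, dec, hdist, hcost⟩ := hN n (le_max_left N m)
  obtain ⟨u, hu, hρ, hΛ, hrate⟩ := exists_testChannel_of_scheme hPX hQ₀ hQ₁ (Nat.cast_pos.1 hn)
    (Nat.ceil_pos.2 (by positivity)) act msg dec
  refine ⟨u, hu, ?_, ?_, hrate.trans ?_⟩
  · rw [hρ, div_le_iff₀' hn]
    exact hdist.trans (by gcongr; linarith)
  · rw [hΛ, div_le_iff₀' hn]
    exact hcost.trans (by gcongr; linarith)
  · have hoverhead : 1 ≤ n * (ε / 2) := by
      rw [div_lt_iff₀ hε] at hnε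
      linarith
    rw [div_le_iff₀' hn]
    calc Real.logb 2 ⌈(2 : ℝ) ^ (n * (R + ε / 2))⌉₊ ≤ n * (R + ε / 2) + 1 :=
          logb_ceil_rpow_le (by positivity)
      _ ≤ n * (R + ε) := by linarith

lemma AchievableEncSI.exists_mem_lbSetEnc_le (hPX : IsPMF PX) (hQ₀ : ∀ x a y, 0 ≤ Q x a y)
    (hQ₁ : ∀ x a, ∑ y, Q x a y = 1) (hR : 0 ≤ R) (hach : AchievableEncSI PX Q ρ Λ R D C) :
    ∃ r ∈ lbSetEnc PX Q ρ Λ D C, r ≤ R := by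
  let excess (u : TestChannel 𝒳 𝒜 𝒴 Xh) : ℝ :=
    max (∑ z, jointLaw PX Q u z * ρ z.1 z.2.2.2 - D)
      (max (∑ z, jointLaw PX Q u z * Λ z.2.1 - C) (singleLetterRate (jointLaw PX Q u) - R))
  have hexcess : Continuous excess := by
    have hρ := continuous_sum_jointLaw_mul PX Q fun z : 𝒳 × 𝒜 × 𝒴 × Xh => ρ z.1 z.2.2.2
    have hΛ := continuous_sum_jointLaw_mul PX Q fun z : 𝒳 × 𝒜 × 𝒴 × Xh => Λ z.2.1
    have hrate := continuous_singleLetterRate_jointLaw (Xh := Xh) PX Q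
    fun_prop
  obtain ⟨u, hu, hle⟩ := exists_nonpos_of_isCompact isCompact_testChannels hexcess.continuousOn
    fun ε hε => by
      simpa only [excess, max_le_iff, sub_le_iff_le_add']
        using hach.exists_testChannel_add_le hPX hQ₀ hQ₁ hR hε
  simp only [excess, max_le_iff, sub_nonpos] at hle
  obtain ⟨hD, hC, hrate⟩ := hle
  exact ⟨_, mem_lbSetEnc.2 ⟨u, hu, hD, hC, rfl⟩, hrate⟩

end Converse

/-! ### Achievable rates -/

lemma ceil_two_rpow_eq_one {t : ℝ} (ht : t ≤ 0) : ⌈(2 : ℝ) ^ t⌉₊ = 1 := by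
  refine le_antisymm (Nat.ceil_le.2 ?_) (Nat.one_le_ceil_iff.2 (by positivity))
  simpa using Real.rpow_le_one_of_one_le_of_nonpos one_le_two ht

lemma pow_le_ceil_two_rpow {k n : ℕ} (hk : 0 < k) {R : ℝ} (hR : Real.logb 2 k ≤ R) :
    k ^ n ≤ ⌈(2 : ℝ) ^ (n * R)⌉₊ := by
  have hk' : (k : ℝ) ≤ 2 ^ R := (Real.logb_le_iff_le_rpow one_lt_two (Nat.cast_pos.2 hk)).1 hR
  have hpow : ((k ^ n : ℕ) : ℝ) ≤ (2 : ℝ) ^ (n * R) := by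
    rw [mul_comm, Real.rpow_mul two_pos.le, Real.rpow_natCast]
    push_cast
    gcongr
  exact_mod_cast hpow.trans (Nat.le_ceil _)

section Achievable

variable [Fintype 𝒳] {PX : 𝒳 → ℝ}

lemma sum_prod_mul_sum {n : ℕ} (hPX : ∑ x, PX x = 1) (φ : 𝒳 → ℝ) :
    ∑ xs : Fin n → 𝒳, (∏ i, PX (xs i)) * ∑ i, φ (xs i) = n * ∑ x, PX x * φ x := by
  simp_rw [Finset.mul_sum]
  rw [Finset.sum_comm]
  simp_rw [sum_prod_apply_mul (fun _ _ => hPX) φ, ← Finset.mul_sum]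
  simp

variable [Fintype 𝒴] {Q : 𝒳 → 𝒜 → 𝒴 → ℝ} {ρ : 𝒳 → Xh → ℝ} {Λ : 𝒜 → ℝ} {R D C : ℝ}

lemma AchievableEncNoSI.achievableEncSI (h : AchievableEncNoSI PX Q ρ Λ R D C) :
    AchievableEncSI PX Q ρ Λ R D C := fun ε hε =>
  let ⟨N, hN⟩ := h ε hε
  ⟨N, fun n hn =>
    let ⟨act, enc, dec, hdist, hcost⟩ := hN n hn
    ⟨act, fun xs _ => enc xs, dec, hdist, hcost⟩⟩

-- At a negative rate `⌈2^(n(R + ε))⌉` is `1` for small `ε`, and one message needs no rate at all.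
lemma AchievableEncSI.achievableEncNoSI_of_neg (h : AchievableEncSI PX Q ρ Λ R D C) (hR : R < 0)
    (R' : ℝ) : AchievableEncNoSI PX Q ρ Λ R' D C := by
  intro ε hε
  obtain ⟨N, hN⟩ := h (min ε (-R)) (lt_min hε (neg_pos.2 hR))
  refine ⟨N, fun n hn => ?_⟩
  obtain ⟨act, msg, dec, hdist, hcost⟩ := hN n hn
  have hε' : min ε (-R) ≤ ε := min_le_left _ _
  have hrate : R + min ε (-R) ≤ 0 := by linarith [min_le_right ε (-R)]
  have hsingle : Subsingleton (Fin ⌈(2 : ℝ) ^ (n * (R + min ε (-R)))⌉₊) := by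
    rw [ceil_two_rpow_eq_one (mul_nonpos_of_nonneg_of_nonpos n.cast_nonneg hrate)]
    infer_instance
  let m₀ : Fin ⌈(2 : ℝ) ^ (n * (R + min ε (-R)))⌉₊ := ⟨0, Nat.ceil_pos.2 (by positivity)⟩
  obtain rfl : msg = fun _ _ => m₀ := Subsingleton.elim _ _
  exact ⟨act, fun _ => ⟨0, Nat.ceil_pos.2 (by positivity)⟩, fun _ => dec m₀,
    hdist.trans (by gcongr), hcost.trans (by gcongr)⟩

lemma achievableEncNoSI_logb_card (hPX : IsPMF PX) (hQ : ∀ x a, ∑ y, Q x a y = 1) {a : 𝒜}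
    {r : 𝒳 → Xh} (hD : ∑ x, PX x * ρ x (r x) ≤ D) (hC : Λ a ≤ C) :
    AchievableEncNoSI PX Q ρ Λ (Real.logb 2 (Fintype.card 𝒳)) D C := by
  obtain ⟨x₀, -, -⟩ := Finset.exists_ne_zero_of_sum_ne_zero (hPX.2.trans_ne one_ne_zero)
  have : Nonempty 𝒳 := ⟨x₀⟩
  refine fun ε hε => ⟨0, fun n _ => ?_⟩
  obtain ⟨e⟩ : Nonempty ((Fin n → 𝒳) ↪
      Fin ⌈(2 : ℝ) ^ (n * (Real.logb 2 (Fintype.card 𝒳) + ε))⌉₊) := by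
    refine Function.Embedding.nonempty_of_card_le ?_
    rw [Fintype.card_fun, Fintype.card_fin, Fintype.card_fin]
    exact pow_le_ceil_two_rpow Fintype.card_pos (le_add_of_nonneg_right hε.le)
  refine ⟨fun _ _ => a, e, fun m _ i => r (Function.invFun e m i), ?_, ?_⟩
  · simp_rw [encActDist, Function.leftInverse_invFun e.injective _]
    rw [sum_encActJoint_mul_source hQ fun xs => ∑ i, ρ (xs i) (r (xs i)),
      sum_prod_mul_sum hPX.2 fun x => ρ x (r x)]
    gcongr
    linarith
  · rw [encActCost, sum_prod_mul_sum hPX.2 fun _ => Λ a, ← Finset.sum_mul, hPX.2, one_mul]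
    gcongr
    linarith

variable [DecidableEq 𝒳] [Fintype 𝒜] [DecidableEq 𝒜] [DecidableEq 𝒴] [Fintype Xh] [DecidableEq Xh]

lemma exists_pointwise_of_nonempty_lbSetEnc (hPX : IsPMF PX) (hQ₀ : ∀ x a y, 0 ≤ Q x a y)
    (hQ₁ : ∀ x a, ∑ y, Q x a y = 1) (h : (lbSetEnc PX Q ρ Λ D C).Nonempty) :
    ∃ (a : 𝒜) (r : 𝒳 → Xh), ∑ x, PX x * ρ x (r x) ≤ D ∧ Λ a ≤ C := by
  obtain ⟨rate, hrate⟩ := h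
  obtain ⟨u, hu, hD, hC, -⟩ := mem_lbSetEnc.1 hrate
  have hsum : ∑ z, jointLaw PX Q u z = 1 := by
    simpa [hPX.2] using sum_jointLaw_mul_source (PX := PX) hQ₁ hu fun _ => 1
  obtain ⟨⟨-, a₀, -, xh₀⟩, -, -⟩ :=
    Finset.exists_ne_zero_of_sum_ne_zero (hsum.trans_ne one_ne_zero)
  have : Nonempty 𝒜 := ⟨a₀⟩
  have : Nonempty Xh := ⟨xh₀⟩
  obtain ⟨a, ha⟩ := Finite.exists_min Λ
  choose r hr using fun x => Finite.exists_min (ρ x)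
  refine ⟨a, r, ?_, ?_⟩
  · rw [← sum_jointLaw_mul_source hQ₁ hu]
    refine le_trans ?_ hD
    gcongr with z
    exacts [jointLaw_nonneg hPX.1 hQ₀ hu z, hr _ _]
  · rw [← one_mul (Λ a), ← hsum, Finset.sum_mul]
    refine le_trans ?_ hC
    gcongr with z
    exacts [jointLaw_nonneg hPX.1 hQ₀ hu z, ha _]

lemma sInf_lbSetEnc_le (hPX : IsPMF PX) (hQ₀ : ∀ x a y, 0 ≤ Q x a y)
    (hQ₁ : ∀ x a, ∑ y, Q x a y = 1) {A : Set ℝ} (hA₀ : {R | AchievableEncNoSI PX Q ρ Λ R D C} ⊆ A)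
    (hA₁ : A ⊆ {R | AchievableEncSI PX Q ρ Λ R D C}) :
    sInf (lbSetEnc PX Q ρ Λ D C) ≤ sInf A := by
  have hbound {R : ℝ} (hR : 0 ≤ R) (hRA : R ∈ A) : sInf (lbSetEnc PX Q ρ Λ D C) ≤ R := by
    obtain ⟨r, hr, hrR⟩ := (hA₁ hRA).exists_mem_lbSetEnc_le hPX hQ₀ hQ₁ hR
    exact (csInf_le bddBelow_lbSetEnc hr).trans hrR
  by_cases hneg : ∃ R ∈ A, R < 0
  · -- Then `A` is unbounded below, so that `sInf A` is the junk value `0`.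
    obtain ⟨R, hRA, hR⟩ := hneg
    obtain rfl : A = Set.univ :=
      Set.eq_univ_of_forall fun R' => hA₀ ((hA₁ hRA).achievableEncNoSI_of_neg hR R')
    rw [Real.sInf_univ]
    exact hbound le_rfl (Set.mem_univ 0)
  push Not at hneg
  rcases (lbSetEnc PX Q ρ Λ D C).eq_empty_or_nonempty with hempty | hne
  · rw [hempty, Real.sInf_empty]
    exact Real.sInf_nonneg hneg
  · obtain ⟨a, r, hD, hC⟩ := exists_pointwise_of_nonempty_lbSetEnc hPX hQ₀ hQ₁ hne
    exact le_csInf ⟨_, hA₀ (achievableEncNoSI_logb_card hPX hQ₁ hD hC)⟩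
      fun R hRA => hbound (hneg R hRA) hRA

end Achievable

theorem lower_bound_encoder_actions_general
    [Fintype 𝒳] [DecidableEq 𝒳] [Fintype 𝒜] [DecidableEq 𝒜]
    [Fintype 𝒴] [DecidableEq 𝒴] [Fintype Xh] [DecidableEq Xh]
    (PX : 𝒳 → ℝ) (hPX : IsPMF PX)
    (Q : 𝒳 → 𝒜 → 𝒴 → ℝ) (hQ₀ : ∀ x a y, 0 ≤ Q x a y) (hQ₁ : ∀ x a, ∑ y, Q x a y = 1)
    (ρ : 𝒳 → Xh → ℝ) (Λ : 𝒜 → ℝ) (D C : ℝ) :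
    sInf {R : ℝ | AchievableEncNoSI PX Q ρ Λ R D C} ≥ sInf (lbSetEnc PX Q ρ Λ D C) ∧
      sInf {R : ℝ | AchievableEncSI PX Q ρ Λ R D C} ≥ sInf (lbSetEnc PX Q ρ Λ D C) :=
  have hsubset : {R | AchievableEncNoSI PX Q ρ Λ R D C} ⊆ {R | AchievableEncSI PX Q ρ Λ R D C} :=
    fun _ hR => hR.achievableEncSI
  ⟨sInf_lbSetEnc_le hPX hQ₀ hQ₁ subset_rfl hsubset, sInf_lbSetEnc_le hPX hQ₀ hQ₁ hsubset subset_rfl⟩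

/-- For the side-information vending machine at the encoder (with or without
side information at the encoder), the rate-distortion-cost function is bounded below by
`min [ I(X;X̂) − I(Y;(X,A)) ]`, minimized over joint laws of the form
`P_X·P_{A|X}·P_{Y|X,A}·P_{X̂|X,A,Y}` satisfying `E[ρ(X,X̂)] ≤ D` and `E[Λ(A)] ≤ C`. -/
theorem lower_bound_encoder_actions
    [Fintype 𝒳] [DecidableEq 𝒳] [Fintype 𝒜] [DecidableEq 𝒜]
    [Fintype 𝒴] [DecidableEq 𝒴] [Fintype Xh] [DecidableEq Xh]
    (PX : 𝒳 → ℝ) (hPX : IsPMF PX)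
    (Q : 𝒳 → 𝒜 → 𝒴 → ℝ) (hQ0 : ∀ x a y, 0 ≤ Q x a y) (hQ1 : ∀ x a, ∑ y, Q x a y = 1)
    (ρ : 𝒳 → Xh → ℝ) (hρ : ∀ x xh, 0 ≤ ρ x xh)
    (Λ : 𝒜 → ℝ) (hΛ : ∀ a, 0 ≤ Λ a)
    (D C : ℝ) (hD : 0 ≤ D) (hC : 0 ≤ C) :
    sInf {R : ℝ | AchievableEncNoSI PX Q ρ Λ R D C} ≥ sInf (lbSetEnc PX Q ρ Λ D C) ∧
      sInf {R : ℝ | AchievableEncSI PX Q ρ Λ R D C} ≥ sInf (lbSetEnc PX Q ρ Λ D C) := by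
  exact lower_bound_encoder_actions_general PX hPX Q hQ0 hQ1 ρ Λ D C
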